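/- Let N, M ≥ 1 be integers and T > 0. Suppose φ : [0,T) → ℂ³, a_j : [0,T) → ℂ, s_j : [0,T) → ℂ³ (j = 1,…,N) and b_j : [0,T) → ℂ, t_j : [0,T) → ℂ³ (j = 1,…,M) are differentiable, satisfy a_j − a_k ∉ Λ and b_j − b_k ∉ Λ for j ≠ k and a_j − b_k + iδ ∉ Λ for all j, k on [0,T), solve on [0,T) the first-order system: ṡ_j = −2Σ_{k≠j} (s_j∧s_k) ℘₂(a_j−a_k); ṫ_j = −2Σ_{k≠j} (t_j∧t_k) ℘₂(b_j−b_k); s_j ȧ_j = −s_j∧(iφ − Σ_{k≠j} s_k ζ₂(a_j−a_k) + Σ_{k=1}^{M} t_k ζ₂(a_j−b_k+iδ)); t_j ḃ_j = +t_j∧(iφ + Σ_{k≠j} t_k ζ₂(b_j−b_k) − Σ_{k=1}^{N} s_k ζ₂(b_j−a_k+iδ)); φ̇ = (i/2)Σ_{j=1}^{N}Σ_{k≠j} (s_j∧s_k) f₂′(a_j−a_k) − (i/2)Σ_{j=1}^{M}Σ_{k≠j} (t_j∧t_k) f₂′(b_j−b_k), and satisfy Σ_{j=1}^{N} s_j(0)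 − Σ_{j=1}^{M} t_j(0) = 0. Then for each j ≤ N the quantity Q_j(t) = s_j·(iφ − Σ_{k≠j} s_k ζ₂(a_j−a_k) + Σ_{k=1}^{M} t_k ζ₂(a_j−b_k+iδ)) is constant on [0,T), and for each j ≤ M the quantity Q_{N+j}(t) = t_j·(iφ + Σ_{k≠j} t_k ζ₂(b_j−b_k) − Σ_{k=1}^{N} s_k ζ₂(b_j−a_k+iδ)) is constant on [0,T). -/

import Mathlib

open Complex Filter MeasureTheory Finset

noncomputable section

/-- The period lattice with half-periods `ℓ` and `iδ`. -/
def Lambda (ℓ δ : ℝ) : Set ℂ :=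
  {z | ∃ n m : ℤ, z = 2 * (n : ℂ) * (ℓ : ℂ) + 2 * (m : ℂ) * ((δ : ℂ) * Complex.I)}

/-- The nonzero lattice points. -/
def latticePts (ℓ δ : ℝ) : Set ℂ := Lambda ℓ δ \ {0}

/-- Weierstrass ℘-function with half-periods `ℓ`, `iδ`. -/
def wP (ℓ δ : ℝ) (z : ℂ) : ℂ :=
  1 / z ^ 2 + ∑' ω : latticePts ℓ δ, (1 / (z - (ω : ℂ)) ^ 2 - 1 / (ω : ℂ) ^ 2)

/-- Weierstrass ζ-function with half-periods `ℓ`, `iδ`. -/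
def wZeta (ℓ δ : ℝ) (z : ℂ) : ℂ :=
  1 / z + ∑' ω : latticePts ℓ δ, (1 / (z - (ω : ℂ)) + 1 / (ω : ℂ) + z / (ω : ℂ) ^ 2)

def zeta2 (ℓ δ : ℝ) (z : ℂ) : ℂ :=
  wZeta ℓ δ z - (wZeta ℓ δ ((δ : ℂ) * Complex.I) / ((δ : ℂ) * Complex.I)) * z

def wp2 (ℓ δ : ℝ) (z : ℂ) : ℂ :=
  wP ℓ δ z + wZeta ℓ δ ((δ : ℂ) * Complex.I) / ((δ : ℂ) * Complex.I)

def f2 (ℓ δ : ℝ) (z : ℂ) : ℂ := (zeta2 ℓ δ z) ^ 2 - wp2 ℓ δ z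

def zeta1 (ℓ δ : ℝ) (z : ℂ) : ℂ :=
  wZeta ℓ δ z - (wZeta ℓ δ (ℓ : ℂ) / (ℓ : ℂ)) * z

/-- Bilinear dot product on `ℂ³` (no conjugation). -/
def dot3 (s t : Fin 3 → ℂ) : ℂ := s 0 * t 0 + s 1 * t 1 + s 2 * t 2

/-- Cross product on `ℂ³`. -/
def cross3 (s t : Fin 3 → ℂ) : Fin 3 → ℂ :=
  ![s 1 * t 2 - s 2 * t 1, s 2 * t 0 - s 0 * t 2, s 0 * t 1 - s 1 * t 0]

/-- The principal-value integral operator `T`. -/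
def pvT (ℓ δ : ℝ) (f : ℝ → Fin 3 → ℂ) (x : ℝ) : Fin 3 → ℂ := fun i =>
  (1 / (Real.pi : ℂ)) * limUnder (nhdsWithin (0 : ℝ) (Set.Ioi 0)) (fun ε : ℝ =>
    ∫ y in {y : ℝ | y ∈ Set.Icc (-ℓ) ℓ ∧ ε ≤ |y - x|},
      zeta1 ℓ δ ((y : ℂ) - (x : ℂ)) * f y i)

/-- The integral operator `T̃`. -/
def tilT (ℓ δ : ℝ) (f : ℝ → Fin 3 → ℂ) (x : ℝ) : Fin 3 → ℂ := fun i =>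
  (1 / (Real.pi : ℂ)) * ∫ y in Set.Icc (-ℓ) ℓ,
      zeta1 ℓ δ ((y : ℂ) - (x : ℂ) + (δ : ℂ) * Complex.I) * f y i

/-!
For a fixed `y`, the difference of the two sides of the Frobenius–Stickelberger formula
`(ζ(x) + ζ(y) - ζ(x + y))² = ℘(x) + ℘(y) + ℘(x + y)` is an elliptic function of `x` whose
singularities are removable, and it tends to `0` at `x = 0`, so it vanishes by Liouville's theorem.
Differentiating the formula at fixed `x + y` yields the addition formula for `ζ`, hence
`(f₂'(y) - f₂'(x)) / 2 = ℘₂(y) (ζ₂(x) - ζ₂(x + y)) + ℘₂(x) (ζ₂(x + y) - ζ₂(y))`.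

As `ζ₂` has period `2iδ`, replacing `t_k` by `-t_k` and `b_k` by `b_k - iδ` makes the two species
of poles a single one with charges `±1`, in which only equal charges couple. The derivative of
`Q_j` is then a combination of triple products `u_j · (u_k ∧ u_l)`, where the functional equation
reduces the coefficient to one independent of `l`. The sum over `l` is therefore a multiple of the
total spin, which is conserved and initially `0`.
-/

open scoped Topology PeriodPair Matrix

section WeierstrassZeta

variable (L : PeriodPair)

/-- The Weierstrass zeta function of the lattice of `L` with its pole `1 / z` at the origin
removed. The summand at `0`, which would be a junk value, is replaced by `0`. -/
def weierstrassZetaRegular (z : ℂ) : ℂ :=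
  ∑' l : L.lattice, if (l : ℂ) = 0 then 0 else (1 / (z - l) + 1 / (l : ℂ) + z / (l : ℂ) ^ 2)

/-- The Weierstrass zeta function of the lattice of `L`, an odd primitive of `-℘[L]`. -/
def weierstrassZeta (z : ℂ) : ℂ := 1 / z + weierstrassZetaRegular L z

lemma norm_weierstrassZeta_summand_le {z l : ℂ} (hl : l ≠ 0) (h : 2 * ‖z‖ ≤ ‖l‖) :
    ‖1 / (z - l) + 1 / l + z / l ^ 2‖ ≤ 2 * ‖z‖ ^ 2 * ‖l‖ ^ (-3 : ℝ) := by
  have l_pos : 0 < ‖l‖ := norm_pos_iff.mpr hl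
  have half_le : ‖l‖ / 2 ≤ ‖z - l‖ := by
    rw [norm_sub_rev]
    exact .trans (by linarith) (norm_sub_norm_le l z)
  have sub_ne : z - l ≠ 0 := norm_pos_iff.mp (by linarith)
  calc
    _ = ‖z ^ 2 / ((z - l) * l ^ 2)‖ := by
      congr 1
      field_simp
      ring
    _ = ‖z‖ ^ 2 / (‖z - l‖ * ‖l‖ ^ 2) := by simp
    _ ≤ ‖z‖ ^ 2 / (‖l‖ / 2 * ‖l‖ ^ 2) := by gcongr
    _ = 2 * ‖z‖ ^ 2 / ‖l‖ ^ 3 := by field_simp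
    _ = _ := by norm_cast

lemma hasSum_weierstrassZetaRegular (z : ℂ) :
    HasSum (fun l : L.lattice ↦
        if (l : ℂ) = 0 then 0 else (1 / (z - l) + 1 / (l : ℂ) + z / (l : ℂ) ^ 2))
      (weierstrassZetaRegular L z) := by
  have summable_bound : Summable fun l : L.lattice ↦ 2 * ‖z‖ ^ 2 * ‖l‖ ^ (-3 : ℝ) :=
    (ZLattice.summable_norm_rpow _ _ (by rw [L.finrank_lattice]; norm_num)).mul_left _
  refine (Summable.of_norm_bounded_eventually summable_bound ?_).hasSum
  have large := (tendsto_norm_cocompact_atTop (E := L.lattice)).eventually_ge_atTop (2 * ‖z‖)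
  rw [cocompact_eq_cofinite] at large
  filter_upwards [large] with l hl
  split_ifs with h
  · rw [norm_zero]; positivity
  · exact norm_weierstrassZeta_summand_le h hl

lemma hasDerivAt_weierstrassZeta_summand {z l : ℂ} (h : z ≠ l) :
    HasDerivAt (fun w ↦ 1 / (w - l) + 1 / l + w / l ^ 2) (-(1 / (z - l) ^ 2 - 1 / l ^ 2)) z := by
  have pole : HasDerivAt (fun w ↦ (w - l)⁻¹) (-1 / (z - l) ^ 2) z :=
    ((hasDerivAt_id z).sub_const l).inv (sub_ne_zero.mpr h)
  have linear : HasDerivAt (fun w ↦ w / l ^ 2) (1 / l ^ 2) z := (hasDerivAt_id z).div_const _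
  simp only [one_div] at linear ⊢
  exact ((pole.add_const l⁻¹).add linear).congr_deriv (by ring)

lemma hasDerivAt_weierstrassZetaRegular {z : ℂ} (hz : z ∉ (L.lattice : Set ℂ) \ {0}) :
    HasDerivAt (weierstrassZetaRegular L) (-L.weierstrassPExcept 0 z) z := by
  refine hasDerivAt_of_tendstoLocallyUniformlyOn (L.isOpen_compl_lattice_sdiff (s := {0}))
    ((L.hasSumLocallyUniformly_weierstrassPExcept 0).tendstoLocallyUniformlyOn.neg)
    (.of_forall fun s w hw ↦ ?_) (fun w _ ↦ hasSum_weierstrassZetaRegular L w) hz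
  simp only [Pi.neg_apply, ← Finset.sum_neg_distrib]
  refine HasDerivAt.fun_sum fun l _ ↦ ?_
  split_ifs with hl
  · simpa using hasDerivAt_const w (0 : ℂ)
  · exact hasDerivAt_weierstrassZeta_summand fun hwl ↦ hw (hwl ▸ ⟨l.2, hl⟩)

lemma weierstrassZetaRegular_neg (z : ℂ) :
    weierstrassZetaRegular L (-z) = -weierstrassZetaRegular L z := by
  simp only [weierstrassZetaRegular]
  rw [← (Equiv.neg L.lattice).tsum_eq, ← tsum_neg]
  congr with l
  have sub_neg : -z - -(l : ℂ) = -(z - l) := by ring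
  simp only [Equiv.neg_apply, NegMemClass.coe_neg, neg_eq_zero, sub_neg]
  split_ifs
  · rw [neg_zero]
  · simp only [one_div, inv_neg, even_two.neg_pow]
    ring

lemma weierstrassZetaRegular_zero : weierstrassZetaRegular L 0 = 0 :=
  CharZero.eq_neg_self_iff.mp (by simpa using weierstrassZetaRegular_neg L 0)

lemma weierstrassZeta_neg (z : ℂ) : weierstrassZeta L (-z) = -weierstrassZeta L z := by
  simp only [weierstrassZeta, weierstrassZetaRegular_neg, one_div, inv_neg, neg_add]

lemma weierstrassP_eq_add_weierstrassPExcept_zero (z : ℂ) :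
    ℘[L] z = 1 / z ^ 2 + L.weierstrassPExcept 0 z := by
  simpa [add_comm] using (L.weierstrassPExcept_add 0 z).symm

lemma hasDerivAt_weierstrassZeta {z : ℂ} (hz : z ∉ L.lattice) :
    HasDerivAt (weierstrassZeta L) (-℘[L] z) z := by
  have z_ne : z ≠ 0 := by rintro rfl; exact hz (zero_mem _)
  have pole : HasDerivAt (fun w : ℂ ↦ 1 / w) (-(1 / z ^ 2)) z := by
    simpa only [one_div] using hasDerivAt_inv z_ne
  exact (pole.add (hasDerivAt_weierstrassZetaRegular L fun h ↦ hz h.1)).congr_deriv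
    (by rw [weierstrassP_eq_add_weierstrassPExcept_zero]; ring)

lemma analyticAt_weierstrassZetaRegular_zero : AnalyticAt ℂ (weierstrassZetaRegular L) 0 := by
  refine DifferentiableOn.analyticAt (s := ((L.lattice : Set ℂ) \ {0})ᶜ) (fun z hz ↦ ?_)
    (L.isOpen_compl_lattice_sdiff.mem_nhds (by simp))
  exact (hasDerivAt_weierstrassZetaRegular L hz).differentiableAt.differentiableWithinAt

lemma analyticAt_weierstrassZeta {z : ℂ} (hz : z ∉ L.lattice) :
    AnalyticAt ℂ (weierstrassZeta L) z := by
  refine DifferentiableOn.analyticAt (s := (L.lattice : Set ℂ)ᶜ) (fun w hw ↦ ?_)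
    (L.isClosed_lattice.isOpen_compl.mem_nhds hz)
  exact (hasDerivAt_weierstrassZeta L hw).differentiableAt.differentiableWithinAt

variable {L}

lemma isPreconnected_compl_lattice : IsPreconnected (L.lattice : Set ℂ)ᶜ := by
  have : Countable L.lattice := L.latticeEquivProd.toEquiv.countable_iff.mpr inferInstance
  have lattice_countable : (L.lattice : Set ℂ).Countable := Set.to_countable _
  exact (lattice_countable.isPathConnected_compl_of_one_lt_rank
    (by rw [Complex.rank_real_complex]; norm_num)).isConnected.isPreconnected

lemma exists_weierstrassZeta_add_eq {l : ℂ} (hl : l ∈ L.lattice) :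
    ∃ η, ∀ z ∉ L.lattice, weierstrassZeta L (z + l) = weierstrassZeta L z + η := by
  have deriv_zero : ∀ z ∈ (L.lattice : Set ℂ)ᶜ,
      HasDerivAt (fun z ↦ weierstrassZeta L (z + l) - weierstrassZeta L z) 0 z := by
    intro z hz
    have add_notMem : z + l ∉ L.lattice := by rwa [Submodule.add_mem_iff_left _ hl]
    have shifted := (hasDerivAt_weierstrassZeta L add_notMem).comp_add_const z l
    refine (shifted.sub (hasDerivAt_weierstrassZeta L hz)).congr_deriv ?_
    rw [L.weierstrassP_add_coe z ⟨l, hl⟩, sub_self]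
  obtain ⟨η, hη⟩ := L.isClosed_lattice.isOpen_compl.exists_is_const_of_deriv_eq_zero
    isPreconnected_compl_lattice
    (fun z hz ↦ (deriv_zero z hz).differentiableAt.differentiableWithinAt)
    (fun z hz ↦ (deriv_zero z hz).deriv)
  exact ⟨η, fun z hz ↦ by rw [← hη z hz]; ring⟩

lemma eventually_notMem_lattice (p : ℂ) : ∀ᶠ z in 𝓝[≠] p, z ∉ L.lattice := by
  filter_upwards [nhdsWithin_le_nhds (L.compl_lattice_sdiff_singleton_mem_nhds p),
    self_mem_nhdsWithin] with z hz hzp hmem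
  exact hz ⟨hmem, hzp⟩

lemma eventually_add_notMem_lattice (p y : ℂ) : ∀ᶠ z in 𝓝[≠] p, z + y ∉ L.lattice := by
  have := eventually_notMem_lattice (L := L) (p + y)
  rwa [← map_add_right_nhdsNE] at this

lemma meromorphic_weierstrassZeta : Meromorphic (weierstrassZeta L) := by
  have at_zero : MeromorphicAt (weierstrassZeta L) 0 :=
    .fun_add (by fun_prop) (analyticAt_weierstrassZetaRegular_zero L).meromorphicAt
  intro p
  by_cases hp : p ∈ L.lattice
  · obtain ⟨η, hη⟩ := exists_weierstrassZeta_add_eq hp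
    have translate : MeromorphicAt (fun z ↦ weierstrassZeta L (z - p) + η) p :=
      .fun_add (meromorphicAt_fun_comp_sub_const_iff_meromorphicAt.mpr (by rwa [sub_self]))
        (by fun_prop)
    refine translate.congr ?_
    filter_upwards [eventually_add_notMem_lattice p (-p)] with z hz
    rw [sub_eq_add_neg, ← hη _ hz, neg_add_cancel_right]
  · exact (analyticAt_weierstrassZeta L hp).meromorphicAt

/-- Liouville's theorem for elliptic functions, allowing removable singularities. -/
theorem exists_eventually_eq_const_of_periodic (Λ : Submodule ℤ ℂ) [DiscreteTopology Λ]
    [IsZLattice ℝ Λ] {G : ℂ → ℂ} (meromorphic : Meromorphic G)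
    (removable : ∀ p, ∃ c, Tendsto G (𝓝[≠] p) (𝓝 c))
    (periodic : ∀ l ∈ Λ, ∀ p, ∀ᶠ z in 𝓝[≠] p, G (z + l) = G z) :
    ∃ c, ∀ p, ∀ᶠ z in 𝓝[≠] p, G z = c := by
  have meromorphicOn : MeromorphicOn G Set.univ := fun p _ ↦ meromorphic p
  set F := toMeromorphicNFOn G Set.univ
  have F_eq (p : ℂ) : G =ᶠ[𝓝[≠] p] F :=
    (meromorphicOn.toMeromorphicNFOn_eq_self_on_nhdsNE (Set.mem_univ p)).symm
  have F_differentiable : Differentiable ℂ F := fun p ↦ by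
    refine ((meromorphicNFOn_toMeromorphicNFOn G Set.univ
      (Set.mem_univ p)).meromorphicOrderAt_nonneg_iff_analyticAt.mp ?_).differentiableAt
    rw [meromorphicOrderAt_toMeromorphicNFOn meromorphicOn (Set.mem_univ p)]
    exact (tendsto_nhds_iff_meromorphicOrderAt_nonneg (meromorphic p)).mp (removable p)
  have F_periodic : ∀ p, ∀ l ∈ Λ, F (p + l) = F p := fun p l hl ↦ by
    have F_continuous := F_differentiable.continuous
    have translate : (fun z ↦ F (z + l)) =ᶠ[𝓝[≠] p] F := by
      have F_eq_add := F_eq (p + l)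
      rw [← map_add_right_nhdsNE] at F_eq_add
      filter_upwards [F_eq p, periodic l hl p, eventually_map.mp F_eq_add] with z hz hGz hzl
      rw [← hz, ← hGz, hzl]
    exact ((ContinuousAt.eventuallyEq_nhds_iff_eventuallyEq_nhdsNE (by fun_prop)
      F_continuous.continuousAt).mp translate).eq_of_nhds
  refine ⟨F 0, fun p ↦ ?_⟩
  filter_upwards [F_eq p] with z hz
  rw [hz]
  exact F_differentiable.apply_eq_apply_of_bounded (IsZLattice.isCompact_range_of_periodic Λ F
    F_differentiable.continuous F_periodic).isBounded z 0

variable (L) in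
/-- The defect in the Frobenius–Stickelberger formula
`(ζ(x) + ζ(y) - ζ(x + y))² = ℘(x) + ℘(y) + ℘(x + y)`. -/
def frobeniusStickelbergerDefect (x y : ℂ) : ℂ :=
  (weierstrassZeta L x + weierstrassZeta L y - weierstrassZeta L (x + y)) ^ 2
    - ℘[L] x - ℘[L] y - ℘[L] (x + y)

lemma frobeniusStickelbergerDefect_neg_add (x y : ℂ) :
    frobeniusStickelbergerDefect L (-(x + y)) y = frobeniusStickelbergerDefect L x y := by
  have sum_eq : -(x + y) + y = -x := by ring
  simp only [frobeniusStickelbergerDefect, sum_eq, weierstrassZeta_neg, L.weierstrassP_neg]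
  ring

lemma frobeniusStickelbergerDefect_add_mem {x y l : ℂ} (hl : l ∈ L.lattice) (hx : x ∉ L.lattice)
    (hxy : x + y ∉ L.lattice) :
    frobeniusStickelbergerDefect L (x + l) y = frobeniusStickelbergerDefect L x y := by
  obtain ⟨η, hη⟩ := exists_weierstrassZeta_add_eq hl
  have periodic (z : ℂ) : ℘[L] (z + l) = ℘[L] z := L.weierstrassP_add_coe z ⟨l, hl⟩
  simp only [frobeniusStickelbergerDefect, add_right_comm x l y, hη x hx, hη _ hxy, periodic]
  ring

lemma eq_add_sub_mul_dslope (f : ℂ → ℂ) (a b : ℂ) : f b = f a + (b - a) * dslope f a b := by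
  linear_combination -sub_smul_dslope f a b

-- With `ζ(x) = 1/x + x a(x)`, `ζ(x + y) = ζ(y) + x b(x)` and `℘(x) = 1/x² + c(x)`, where `a`, `c`
-- vanish at `0` and `b(0) = -℘(y)`, the poles at `x = 0` cancel and what remains tends to
-- `2 (a(0) - b(0)) - 2 ℘(y) = 0`.
lemma tendsto_frobeniusStickelbergerDefect_zero {y : ℂ} (hy : y ∉ L.lattice) :
    Tendsto (frobeniusStickelbergerDefect L · y) (𝓝[≠] 0) (𝓝 0) := by
  have regular_deriv := hasDerivAt_weierstrassZetaRegular L (z := 0) (by simp)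
  have shifted_deriv : HasDerivAt (fun x ↦ weierstrassZeta L (x + y)) (-℘[L] y) 0 :=
    HasDerivAt.comp_add_const 0 y (by simpa using hasDerivAt_weierstrassZeta L hy)
  have regular_eq := eq_add_sub_mul_dslope (weierstrassZetaRegular L) 0
  have shifted_eq := eq_add_sub_mul_dslope (fun x ↦ weierstrassZeta L (x + y)) 0
  have a_cont := continuousAt_dslope_same.mpr regular_deriv.differentiableAt
  have b_cont := continuousAt_dslope_same.mpr shifted_deriv.differentiableAt
  have a_zero := dslope_same (weierstrassZetaRegular L) 0
  have b_zero := dslope_same (fun x ↦ weierstrassZeta L (x + y)) 0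
  rw [regular_deriv.deriv, L.weierstrassPExcept_zero, neg_zero] at a_zero
  rw [shifted_deriv.deriv] at b_zero
  set a := dslope (weierstrassZetaRegular L) 0
  set b := dslope (fun x ↦ weierstrassZeta L (x + y)) 0
  simp only [weierstrassZetaRegular_zero, sub_zero, zero_add] at regular_eq shifted_eq
  have c_cont := (L.analyticAt_weierstrassPExcept 0).continuousAt
  have P_cont : ContinuousAt (fun x ↦ ℘[L] (x + y)) 0 :=
    ContinuousAt.comp' (f := (· + y))
      (by simpa using (L.analyticOnNhd_weierstrassP y hy).continuousAt) (by fun_prop)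
  have remainder_cont : ContinuousAt (fun x ↦ 2 * (a x - b x) + x ^ 2 * (a x - b x) ^ 2
      - L.weierstrassPExcept 0 x - ℘[L] y - ℘[L] (x + y)) 0 := by fun_prop
  have remainder_zero : 2 * (a 0 - b 0) + 0 ^ 2 * (a 0 - b 0) ^ 2
      - L.weierstrassPExcept 0 0 - ℘[L] y - ℘[L] (0 + y) = 0 := by
    rw [a_zero, b_zero, L.weierstrassPExcept_zero, zero_add]
    ring
  refine ((remainder_zero ▸ remainder_cont.tendsto).mono_left nhdsWithin_le_nhds).congr' ?_
  filter_upwards [self_mem_nhdsWithin] with x (x_ne : x ≠ 0)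
  rw [frobeniusStickelbergerDefect, shifted_eq, weierstrassZeta, regular_eq,
    weierstrassP_eq_add_weierstrassPExcept_zero L x]
  field_simp
  ring

lemma tendsto_frobeniusStickelbergerDefect_of_mem {y l : ℂ} (hy : y ∉ L.lattice)
    (hl : l ∈ L.lattice) : Tendsto (frobeniusStickelbergerDefect L · y) (𝓝[≠] l) (𝓝 0) := by
  rw [← zero_add l, ← map_add_right_nhdsNE, tendsto_map'_iff]
  refine (tendsto_frobeniusStickelbergerDefect_zero hy).congr' ?_
  filter_upwards [eventually_notMem_lattice 0, eventually_add_notMem_lattice 0 y] with x hx hxy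
  exact (frobeniusStickelbergerDefect_add_mem hl hx hxy).symm

lemma tendsto_frobeniusStickelbergerDefect_of_add_mem {y p : ℂ} (hy : y ∉ L.lattice)
    (hp : p + y ∈ L.lattice) : Tendsto (frobeniusStickelbergerDefect L · y) (𝓝[≠] p) (𝓝 0) := by
  have reflect := ((Homeomorph.addRight y).trans (Homeomorph.neg ℂ)).map_punctured_nhds_eq p
  refine ((tendsto_frobeniusStickelbergerDefect_of_mem hy (neg_mem hp)).comp
    (tendsto_map.mono_right reflect.le)).congr fun x ↦ ?_
  exact frobeniusStickelbergerDefect_neg_add x y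

lemma continuousAt_frobeniusStickelbergerDefect {x y : ℂ} (hx : x ∉ L.lattice)
    (hxy : x + y ∉ L.lattice) : ContinuousAt (frobeniusStickelbergerDefect L · y) x := by
  have zeta_x := (analyticAt_weierstrassZeta L hx).continuousAt
  have zeta_xy : ContinuousAt (fun x ↦ weierstrassZeta L (x + y)) x :=
    (analyticAt_weierstrassZeta L hxy).continuousAt.comp' (f := (· + y)) (by fun_prop)
  have P_x := (L.analyticOnNhd_weierstrassP x hx).continuousAt
  have P_xy : ContinuousAt (fun x ↦ ℘[L] (x + y)) x :=
    (L.analyticOnNhd_weierstrassP _ hxy).continuousAt.comp' (f := (· + y)) (by fun_prop)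
  unfold frobeniusStickelbergerDefect
  fun_prop

lemma meromorphic_frobeniusStickelbergerDefect (y : ℂ) :
    Meromorphic (frobeniusStickelbergerDefect L · y) := by
  have zeta_meromorphic := meromorphic_weierstrassZeta (L := L)
  have zeta_add := Meromorphic.meromorphic_fun_comp_add_const_iff_meromorphic (c := y) |>.mpr
    zeta_meromorphic
  have P_add := Meromorphic.meromorphic_fun_comp_add_const_iff_meromorphic (c := y) |>.mpr
    L.meromorphic_weierstrassP
  unfold frobeniusStickelbergerDefect
  fun_prop

theorem frobeniusStickelbergerDefect_eq_zero {x y : ℂ} (hx : x ∉ L.lattice) (hy : y ∉ L.lattice)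
    (hxy : x + y ∉ L.lattice) : frobeniusStickelbergerDefect L x y = 0 := by
  obtain ⟨c, hc⟩ := exists_eventually_eq_const_of_periodic L.lattice
    (meromorphic_frobeniusStickelbergerDefect (L := L) y)
    (fun p ↦ by
      by_cases hp : p ∈ L.lattice
      · exact ⟨0, tendsto_frobeniusStickelbergerDefect_of_mem hy hp⟩
      by_cases hpy : p + y ∈ L.lattice
      · exact ⟨0, tendsto_frobeniusStickelbergerDefect_of_add_mem hy hpy⟩
      · exact ⟨_, (continuousAt_frobeniusStickelbergerDefect hp hpy).tendsto.mono_left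
          nhdsWithin_le_nhds⟩)
    (fun l hl p ↦ by
      filter_upwards [eventually_notMem_lattice p, eventually_add_notMem_lattice p y] with z hz hzy
      exact frobeniusStickelbergerDefect_add_mem hl hz hzy)
  have c_zero : c = 0 := tendsto_nhds_unique
    (tendsto_const_nhds.congr' (EventuallyEq.symm (hc 0)))
    (tendsto_frobeniusStickelbergerDefect_zero hy)
  rw [← c_zero]
  exact tendsto_nhds_unique
    ((continuousAt_frobeniusStickelbergerDefect hx hxy).tendsto.mono_left nhdsWithin_le_nhds)
    (tendsto_const_nhds.congr' (EventuallyEq.symm (hc x)))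

lemma hasDerivAt_weierstrassP {z : ℂ} (hz : z ∉ L.lattice) : HasDerivAt ℘[L] (℘'[L] z) z := by
  rw [← L.deriv_weierstrassP]
  exact (L.analyticOnNhd_weierstrassP z hz).differentiableAt.hasDerivAt

-- Differentiate the Frobenius–Stickelberger formula along `(1, -1)`, which fixes `x + y`.
theorem weierstrassZeta_add_formula {x y : ℂ} (hx : x ∉ L.lattice) (hy : y ∉ L.lattice)
    (hxy : x + y ∉ L.lattice) :
    ℘'[L] x - ℘'[L] y = 2 * (℘[L] x - ℘[L] y) *
      (weierstrassZeta L (x + y) - weierstrassZeta L x - weierstrassZeta L y) := by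
  have x_deriv : HasDerivAt (x + ·) 1 (0 : ℂ) := (hasDerivAt_id 0).const_add x
  have y_deriv : HasDerivAt (y - ·) (-1) (0 : ℂ) := (hasDerivAt_id 0).const_sub y
  have hx₀ : x + 0 ∉ L.lattice := by rwa [add_zero]
  have hy₀ : y - 0 ∉ L.lattice := by rwa [sub_zero]
  have zeta_deriv := (((hasDerivAt_weierstrassZeta L hx₀).comp 0 x_deriv).add
    ((hasDerivAt_weierstrassZeta L hy₀).comp 0 y_deriv)).sub_const (weierstrassZeta L (x + y))
  have defect_deriv := (((zeta_deriv.pow 2).sub ((hasDerivAt_weierstrassP hx₀).comp 0 x_deriv)).sub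
    ((hasDerivAt_weierstrassP hy₀).comp 0 y_deriv)).sub_const (℘[L] (x + y))
  have defect_zero : (fun t : ℂ ↦ frobeniusStickelbergerDefect L (x + t) (y - t)) =ᶠ[𝓝 0] 0 := by
    have open_compl := L.isClosed_lattice.isOpen_compl
    filter_upwards [x_deriv.continuousAt.preimage_mem_nhds (open_compl.mem_nhds hx₀),
      y_deriv.continuousAt.preimage_mem_nhds (open_compl.mem_nhds hy₀)] with t ht ht'
    exact frobeniusStickelbergerDefect_eq_zero ht ht' (by rwa [add_add_sub_cancel])
  have deriv_zero : HasDerivAt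
      (fun t : ℂ ↦ frobeniusStickelbergerDefect L (x + t) (y - t)) 0 0 :=
    (hasDerivAt_const 0 0).congr_of_eventuallyEq defect_zero
  simp only [frobeniusStickelbergerDefect, add_add_sub_cancel] at deriv_zero
  have deriv_eq := defect_deriv.unique deriv_zero
  simp only [Nat.cast_ofNat, Pi.add_apply, Function.comp_apply, add_zero, sub_zero,
    Nat.add_one_sub_one, pow_one, mul_one, mul_neg, neg_neg, sub_neg_eq_add] at deriv_eq
  linear_combination -deriv_eq

end WeierstrassZeta

section ShiftedZeta

variable (L : PeriodPair) (κ : ℂ)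

/-- The zeta function of the lattice of `L` shifted by the linear function `κ z`; a suitable `κ`
makes it periodic along a prescribed period. -/
def shiftedZeta (z : ℂ) : ℂ := weierstrassZeta L z - κ * z

/-- The derivative of `-shiftedZeta L κ`. -/
def shiftedP (z : ℂ) : ℂ := ℘[L] z + κ

/-- The function `ζ² - ℘` for the shifted zeta function and its derivative, which is `f₂` in the
paper. -/
def shiftedF (z : ℂ) : ℂ := shiftedZeta L κ z ^ 2 - shiftedP L κ z

/-- The shift `κ` for which `shiftedZeta L κ` is periodic along `ω₂`. -/
def halfPeriodShift : ℂ := weierstrassZeta L (L.ω₂ / 2) / (L.ω₂ / 2)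

lemma shiftedZeta_neg (z : ℂ) : shiftedZeta L κ (-z) = -shiftedZeta L κ z := by
  simp only [shiftedZeta, weierstrassZeta_neg]
  ring

lemma shiftedP_neg (z : ℂ) : shiftedP L κ (-z) = shiftedP L κ z := by
  simp only [shiftedP, L.weierstrassP_neg]

lemma deriv_shiftedF_neg (z : ℂ) : deriv (shiftedF L κ) (-z) = -deriv (shiftedF L κ) z := by
  have even : (fun w ↦ shiftedF L κ (-w)) = shiftedF L κ := by
    funext w
    simp only [shiftedF, shiftedZeta_neg, shiftedP_neg, neg_sq]
  conv_rhs => rw [← even, deriv_comp_neg, neg_neg]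

variable {L}

lemma hasDerivAt_shiftedZeta {z : ℂ} (hz : z ∉ L.lattice) :
    HasDerivAt (shiftedZeta L κ) (-shiftedP L κ z) z :=
  ((hasDerivAt_weierstrassZeta L hz).sub ((hasDerivAt_id z).const_mul κ)).congr_deriv
    (by rw [shiftedP]; ring)

lemma deriv_shiftedF {z : ℂ} (hz : z ∉ L.lattice) :
    deriv (shiftedF L κ) z = -2 * shiftedZeta L κ z * shiftedP L κ z - ℘'[L] z := by
  refine ((((hasDerivAt_shiftedZeta κ hz).pow 2).sub
    ((hasDerivAt_weierstrassP hz).add_const κ)).congr_deriv ?_).deriv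
  push_cast
  ring

lemma shiftedF_functional_equation {x y : ℂ} (hx : x ∉ L.lattice) (hy : y ∉ L.lattice)
    (hxy : x + y ∉ L.lattice) :
    deriv (shiftedF L κ) y / 2 - deriv (shiftedF L κ) x / 2 =
      shiftedP L κ y * (shiftedZeta L κ x - shiftedZeta L κ (x + y))
        + shiftedP L κ x * (shiftedZeta L κ (x + y) - shiftedZeta L κ y) := by
  rw [deriv_shiftedF κ hx, deriv_shiftedF κ hy]
  simp only [shiftedZeta, shiftedP]
  linear_combination weierstrassZeta_add_formula hx hy hxy / 2

lemma shiftedZeta_add_ω₂ {z : ℂ} (hz : z ∉ L.lattice) :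
    shiftedZeta L (halfPeriodShift L) (z + L.ω₂) = shiftedZeta L (halfPeriodShift L) z := by
  obtain ⟨η, hη⟩ := exists_weierstrassZeta_add_eq L.ω₂_mem_lattice
  have half_notMem := L.ω₂_div_two_notMem_lattice
  have half_ne : L.ω₂ / 2 ≠ 0 := fun h ↦ half_notMem (h ▸ zero_mem _)
  have ω₂_ne : L.ω₂ ≠ 0 := fun h ↦ half_ne (by rw [h, zero_div])
  have half_eq := hη (-(L.ω₂ / 2)) (by rwa [neg_mem_iff])
  rw [neg_add_eq_sub, sub_half, weierstrassZeta_neg] at half_eq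
  rw [shiftedZeta, shiftedZeta, halfPeriodShift, hη z hz]
  field_simp
  linear_combination -L.ω₂ * half_eq

end ShiftedZeta

section RectangularLattice

/-- The period pair `(2ℓ, 2iδ)`. -/
def rectangularPeriodPair {ℓ δ : ℝ} (hℓ : 0 < ℓ) (hδ : 0 < δ) : PeriodPair where
  ω₁ := 2 * (ℓ : ℂ)
  ω₂ := 2 * ((δ : ℂ) * Complex.I)
  indep := by
    refine LinearIndependent.pair_iff.mpr fun s t h ↦ ?_
    have re_eq : s = 0 ∨ ℓ = 0 := by simpa using congrArg Complex.re h
    have im_eq : t = 0 ∨ δ = 0 := by simpa using congrArg Complex.im h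
    exact ⟨re_eq.resolve_right hℓ.ne', im_eq.resolve_right hδ.ne'⟩

variable {ℓ δ : ℝ} (hℓ : 0 < ℓ) (hδ : 0 < δ)

lemma coe_lattice_rectangularPeriodPair :
    ((rectangularPeriodPair hℓ hδ).lattice : Set ℂ) = Lambda ℓ δ := by
  ext z
  rw [SetLike.mem_coe, PeriodPair.mem_lattice]
  refine exists₂_congr fun m n ↦ ?_
  rw [eq_comm, rectangularPeriodPair]
  ring_nf

lemma neg_mem_Lambda {z : ℂ} (hz : z ∈ Lambda ℓ δ) : -z ∈ Lambda ℓ δ := by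
  obtain ⟨n, m, rfl⟩ := hz
  exact ⟨-n, -m, by push_cast; ring⟩

lemma tsum_latticePts (f : ℂ → ℂ) :
    ∑' ω : latticePts ℓ δ, f ω =
      ∑' l : (rectangularPeriodPair hℓ hδ).lattice, if (l : ℂ) = 0 then 0 else f l := by
  rw [latticePts, ← coe_lattice_rectangularPeriodPair hℓ hδ, _root_.tsum_subtype]
  refine Eq.trans ?_ (_root_.tsum_subtype ((rectangularPeriodPair hℓ hδ).lattice : Set ℂ)
    fun l ↦ if l = 0 then 0 else f l).symm
  congr with z
  by_cases hz : z = 0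
  · simp [hz]
  · by_cases hzl : z ∈ (rectangularPeriodPair hℓ hδ).lattice <;> simp [hz, hzl]

lemma wZeta_eq : wZeta ℓ δ = weierstrassZeta (rectangularPeriodPair hℓ hδ) := by
  funext z
  rw [wZeta, weierstrassZeta, weierstrassZetaRegular,
    tsum_latticePts hℓ hδ fun l ↦ 1 / (z - l) + 1 / l + z / l ^ 2]

lemma wP_eq : wP ℓ δ = ℘[rectangularPeriodPair hℓ hδ] := by
  funext z
  rw [wP, weierstrassP_eq_add_weierstrassPExcept_zero, PeriodPair.weierstrassPExcept,
    tsum_latticePts hℓ hδ fun l ↦ 1 / (z - l) ^ 2 - 1 / l ^ 2]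

lemma halfPeriodShift_rectangularPeriodPair :
    halfPeriodShift (rectangularPeriodPair hℓ hδ) = wZeta ℓ δ (δ * I) / (δ * I) := by
  have half_eq : (rectangularPeriodPair hℓ hδ).ω₂ / 2 = δ * I :=
    mul_div_cancel_left₀ _ two_ne_zero
  rw [halfPeriodShift, half_eq, wZeta_eq hℓ hδ]

lemma zeta2_eq : zeta2 ℓ δ = shiftedZeta (rectangularPeriodPair hℓ hδ)
    (halfPeriodShift (rectangularPeriodPair hℓ hδ)) := by
  funext z
  rw [zeta2, shiftedZeta, halfPeriodShift_rectangularPeriodPair, wZeta_eq hℓ hδ]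

lemma wp2_eq : wp2 ℓ δ = shiftedP (rectangularPeriodPair hℓ hδ)
    (halfPeriodShift (rectangularPeriodPair hℓ hδ)) := by
  funext z
  rw [wp2, shiftedP, halfPeriodShift_rectangularPeriodPair, wP_eq hℓ hδ]

lemma f2_eq : f2 ℓ δ = shiftedF (rectangularPeriodPair hℓ hδ)
    (halfPeriodShift (rectangularPeriodPair hℓ hδ)) := by
  funext z
  rw [f2, shiftedF, zeta2_eq hℓ hδ, wp2_eq hℓ hδ]

include hℓ hδ

lemma zeta2_neg (z : ℂ) : zeta2 ℓ δ (-z) = -zeta2 ℓ δ z := by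
  rw [zeta2_eq hℓ hδ, shiftedZeta_neg]

lemma deriv_f2_neg (z : ℂ) : deriv (f2 ℓ δ) (-z) = -deriv (f2 ℓ δ) z := by
  rw [f2_eq hℓ hδ, deriv_shiftedF_neg]

lemma zeta2_add_half_period {z : ℂ} (hz : z - δ * I ∉ Lambda ℓ δ) :
    zeta2 ℓ δ (z + δ * I) = zeta2 ℓ δ (z - δ * I) := by
  rw [← coe_lattice_rectangularPeriodPair hℓ hδ] at hz
  rw [zeta2_eq hℓ hδ, ← shiftedZeta_add_ω₂ hz, rectangularPeriodPair]
  ring_nf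

end RectangularLattice

section SpinPoleAlgebra

variable {R ι : Type*} [CommRing R] {P Z F : ι → ι → R} {u : ι → Fin 3 → R}

lemma cross_dotProduct (w x y : Fin 3 → R) : w ⨯₃ x ⬝ᵥ y = w ⬝ᵥ x ⨯₃ y := by
  rw [dotProduct_comm, triple_product_permutation]

lemma coupling_mul_tripleProduct (hF : ∀ j k l, j ≠ k → k ≠ l → j ≠ l →
      F k l - F j k = P k l * (Z j k - Z j l) + P j k * (Z j l - Z k l)) (j k l : ι) :
    (P j k * (Z j l - Z k l) + P k l * (Z j k - Z j l) - F k l) * (u j ⬝ᵥ u k ⨯₃ u l) =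
      -F j k * (u j ⬝ᵥ u k ⨯₃ u l) := by
  rcases eq_or_ne j k with rfl | hjk
  · simp only [dot_self_cross, mul_zero]
  rcases eq_or_ne k l with rfl | hkl
  · simp only [cross_self, dotProduct_zero, mul_zero]
  rcases eq_or_ne j l with rfl | hjl
  · simp only [dot_cross_self, mul_zero]
  · linear_combination -(u j ⬝ᵥ u k ⨯₃ u l) * hF j k l hjk hkl hjl

variable [Fintype ι]

/-- The velocity of the spin `u j` of a system of spins `u` with charges `r` and pairwise
couplings `P`. Only equal charges interact when the charges are `±1`. -/
def spinVelocity (r : ι → R) (P : ι → ι → R) (u : ι → Fin 3 → R) (j : ι) : Fin 3 → R :=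
  -∑ k, ((r j + r k) * P j k) • (u j ⨯₃ u k)

/-- The field felt by the `j`-th spin in the background field `Y`. -/
def localField (Y : Fin 3 → R) (Z : ι → ι → R) (u : ι → Fin 3 → R) (j : ι) : Fin 3 → R :=
  Y - ∑ k, Z j k • u k

/-- The velocity of the background field driven by spins `u` with charges `r` and pairwise couplings
`F`. -/
def backgroundVelocity (r : ι → R) (F : ι → ι → R) (u : ι → Fin 3 → R) : Fin 3 → R :=
  -∑ k, ∑ l, (r k * F k l) • (u k ⨯₃ u l)

variable {r v : ι → R} {Y : Fin 3 → R}

lemma sum_spinVelocity (hP : ∀ j k, P j k = P k j) : ∑ j, spinVelocity r P u j = 0 := by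
  have swap : ∑ j, ∑ k, (r k * P j k) • (u j ⨯₃ u k) =
      -∑ j, ∑ k, (r j * P j k) • (u j ⨯₃ u k) := by
    rw [Finset.sum_comm]
    simp only [← Finset.sum_neg_distrib, ← smul_neg, cross_anticomm]
    exact Finset.sum_congr rfl fun j _ ↦ Finset.sum_congr rfl fun k _ ↦ by rw [hP j k]
  simp only [spinVelocity, add_mul, add_smul, Finset.sum_add_distrib, Finset.sum_neg_distrib, swap,
    add_neg_cancel, neg_zero]

lemma localField_sub_localField (j k : ι) :
    localField Y Z u k - localField Y Z u j = ∑ l, (Z j l - Z k l) • u l := by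
  simp only [localField, sub_smul, Finset.sum_sub_distrib]
  abel

lemma sub_mul_dotProduct {j k : ι} (hj : v j • u j = -r j • (u j ⨯₃ localField Y Z u j))
    (hk : v k • u k = -r k • (u k ⨯₃ localField Y Z u k)) :
    (v j - v k) * (u j ⬝ᵥ u k) = r j * (u j ⬝ᵥ u k ⨯₃ localField Y Z u j)
      + r k * (u j ⬝ᵥ u k ⨯₃ localField Y Z u k) := by
  have dot_j := congrArg (· ⬝ᵥ u k) hj
  have dot_k := congrArg (u j ⬝ᵥ ·) hk
  simp only [smul_dotProduct, dotProduct_smul, smul_eq_mul, cross_dotProduct] at dot_j dot_k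
  rw [← cross_anticomm, dotProduct_neg] at dot_j
  linear_combination dot_j - dot_k

-- The motion of the poles contributes exactly what turns the field at `j` into the difference of
-- the fields at `k` and `j`, from which the background field drops out.
lemma spinVelocity_dotProduct_localField_add
    (hv : ∀ k, v k • u k = -r k • (u k ⨯₃ localField Y Z u k)) (j : ι) :
    spinVelocity r P u j ⬝ᵥ localField Y Z u j + ∑ k, P j k * (v j - v k) * (u j ⬝ᵥ u k) =
      ∑ k, ∑ l, r k * P j k * (Z j l - Z k l) * (u j ⬝ᵥ u k ⨯₃ u l) := by
  have field_difference (k : ι) : ∑ l, (Z j l - Z k l) * (u j ⬝ᵥ u k ⨯₃ u l) =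
      u j ⬝ᵥ u k ⨯₃ localField Y Z u k - u j ⬝ᵥ u k ⨯₃ localField Y Z u j := by
    rw [← dotProduct_sub, ← map_sub, localField_sub_localField]
    simp only [map_sum, map_smul, dotProduct_sum, dotProduct_smul, smul_eq_mul]
  simp only [spinVelocity, neg_dotProduct, sum_dotProduct, smul_dotProduct, smul_eq_mul,
    cross_dotProduct, ← Finset.sum_neg_distrib, ← Finset.sum_add_distrib, mul_assoc,
    ← Finset.mul_sum, field_difference, sub_mul_dotProduct (hv j) (hv _)]
  exact Finset.sum_congr rfl fun k _ ↦ by ring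

lemma dotProduct_sum_spinVelocity (hP : ∀ k l, P k l = P l k) (z : ι → R) (w : Fin 3 → R) :
    w ⬝ᵥ ∑ k, z k • spinVelocity r P u k =
      -∑ k, ∑ l, r k * P k l * (z k - z l) * (w ⬝ᵥ u k ⨯₃ u l) := by
  have swap : ∑ k, ∑ l, z k * (r l * P k l * (w ⬝ᵥ u k ⨯₃ u l)) =
      -∑ k, ∑ l, z l * (r k * P k l * (w ⬝ᵥ u k ⨯₃ u l)) := by
    rw [Finset.sum_comm]
    simp only [← Finset.sum_neg_distrib]
    refine Finset.sum_congr rfl fun k _ ↦ Finset.sum_congr rfl fun l _ ↦ ?_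
    rw [hP l k, ← cross_anticomm, dotProduct_neg]
    ring
  simp only [spinVelocity, dotProduct_sum, dotProduct_smul, dotProduct_neg, smul_eq_mul,
    Finset.mul_sum, add_mul, mul_neg, mul_add, Finset.sum_add_distrib, Finset.sum_neg_distrib, swap,
    mul_sub, sub_mul, Finset.sum_sub_distrib]
  simp only [← sub_eq_add_neg, mul_assoc, mul_left_comm (z _)]

lemma dotProduct_backgroundVelocity (w : Fin 3 → R) :
    w ⬝ᵥ backgroundVelocity r F u = -∑ k, ∑ l, r k * F k l * (w ⬝ᵥ u k ⨯₃ u l) := by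
  simp only [backgroundVelocity, dotProduct_neg, dotProduct_sum, dotProduct_smul, smul_eq_mul]

theorem charge_rate_eq_zero (hP : ∀ j k, P j k = P k j)
    (hF : ∀ j k l, j ≠ k → k ≠ l → j ≠ l →
      F k l - F j k = P k l * (Z j k - Z j l) + P j k * (Z j l - Z k l))
    (hu : ∑ k, u k = 0)
    (hv : ∀ k, v k • u k = -r k • (u k ⨯₃ localField Y Z u k)) (j : ι) :
    spinVelocity r P u j ⬝ᵥ localField Y Z u j +
      u j ⬝ᵥ (backgroundVelocity r F u -
        ∑ k, (Z j k • spinVelocity r P u k + (-(P j k * (v j - v k))) • u k)) = 0 := by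
  have total : ∑ k, ∑ l, r k * F j k * (u j ⬝ᵥ u k ⨯₃ u l) = 0 := by
    simp only [← Finset.mul_sum, ← dotProduct_sum, ← map_sum, hu, map_zero, dotProduct_zero,
      mul_zero, Finset.sum_const_zero]
  have spin_terms := spinVelocity_dotProduct_localField_add (P := P) hv j
  have field_terms := dotProduct_sum_spinVelocity (r := r) (u := u) hP (Z j) (u j)
  have position_terms : u j ⬝ᵥ ∑ k, (-(P j k * (v j - v k))) • u k =
      -∑ k, P j k * (v j - v k) * (u j ⬝ᵥ u k) := by
    simp only [dotProduct_sum, dotProduct_smul, smul_eq_mul, neg_mul, Finset.sum_neg_distrib]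
  rw [dotProduct_sub, dotProduct_backgroundVelocity, Finset.sum_add_distrib, dotProduct_add,
    field_terms, position_terms]
  trans -∑ k, ∑ l, r k * F j k * (u j ⬝ᵥ u k ⨯₃ u l)
  · have cancel : ∀ k l, r k * P j k * (Z j l - Z k l) * (u j ⬝ᵥ u k ⨯₃ u l) +
        r k * P k l * (Z j k - Z j l) * (u j ⬝ᵥ u k ⨯₃ u l) -
        r k * F k l * (u j ⬝ᵥ u k ⨯₃ u l) = -(r k * F j k * (u j ⬝ᵥ u k ⨯₃ u l)) := fun k l ↦ by
      linear_combination r k * coupling_mul_tripleProduct (u := u) hF j k l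
    have sum_cancel := Fintype.sum_congr _ _ fun k ↦ Fintype.sum_congr _ _ fun l ↦ cancel k l
    simp only [Finset.sum_add_distrib, Finset.sum_sub_distrib,
      Finset.sum_neg_distrib] at sum_cancel
    linear_combination spin_terms + sum_cancel
  · rw [total, neg_zero]

end SpinPoleAlgebra

section SpinPoleDynamics

lemma eq_of_hasDerivWithinAt_zero {E : Type*} [NormedAddCommGroup E] [NormedSpace ℝ E]
    {f : ℝ → E} {S : Set ℝ} (hS : Convex ℝ S) (hf : ∀ τ ∈ S, HasDerivWithinAt f 0 S τ)
    {τ₁ τ₂ : ℝ} (h₁ : τ₁ ∈ S) (h₂ : τ₂ ∈ S) : f τ₁ = f τ₂ := by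
  have := hS.norm_image_sub_le_of_norm_hasDerivWithin_le (C := 0) hf (by simp) h₂ h₁
  simpa [sub_eq_zero] using this

lemma hasDerivWithinAt_dotProduct {𝕜 𝔸 n : Type*} [NontriviallyNormedField 𝕜] [NormedRing 𝔸]
    [NormedAlgebra 𝕜 𝔸] [Fintype n] {f g : 𝕜 → n → 𝔸} {f' g' : n → 𝔸} {S : Set 𝕜} {x : 𝕜}
    (hf : HasDerivWithinAt f f' S x) (hg : HasDerivWithinAt g g' S x) :
    HasDerivWithinAt (fun y ↦ f y ⬝ᵥ g y) (f' ⬝ᵥ g x + f x ⬝ᵥ g') S x := by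
  simp only [dotProduct, ← Finset.sum_add_distrib]
  exact HasDerivWithinAt.fun_sum fun i _ ↦
    (hasDerivWithinAt_pi.mp hf i).mul (hasDerivWithinAt_pi.mp hg i)

/-- The identities between the interaction functions of a spin-pole system on which the
conservation of its charges rests; `Λ` is the set of their singularities. -/
structure IsSpinPoleKernel (Λ : Set ℂ) (ζ P F : ℂ → ℂ) : Prop where
  hasDerivAt : ∀ z ∉ Λ, HasDerivAt ζ (-P z) z
  even : ∀ z, P (-z) = P z
  functional_equation : ∀ x y, x ∉ Λ → y ∉ Λ → x + y ∉ Λ →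
    F y - F x = P y * (ζ x - ζ (x + y)) + P x * (ζ (x + y) - ζ y)

theorem isSpinPoleKernel_shifted (L : PeriodPair) (κ : ℂ) :
    IsSpinPoleKernel L.lattice (shiftedZeta L κ) (shiftedP L κ)
      (fun z ↦ deriv (shiftedF L κ) z / 2) where
  hasDerivAt _ hz := hasDerivAt_shiftedZeta κ hz
  even := shiftedP_neg L κ
  functional_equation _ _ hx hy hxy := shiftedF_functional_equation κ hx hy hxy

theorem isSpinPoleKernel_zeta2 {ℓ δ : ℝ} (hℓ : 0 < ℓ) (hδ : 0 < δ) :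
    IsSpinPoleKernel (Lambda ℓ δ) (zeta2 ℓ δ) (wp2 ℓ δ) (fun z ↦ deriv (f2 ℓ δ) z / 2) := by
  rw [← coe_lattice_rectangularPeriodPair hℓ hδ, zeta2_eq hℓ hδ, wp2_eq hℓ hδ, f2_eq hℓ hδ]
  exact isSpinPoleKernel_shifted _ _

variable {ι : Type*} [Fintype ι]

/-- The matrix of pairwise interactions `g` of particles at the positions `x`. -/
def interaction (g : ℂ → ℂ) (x : ι → ℂ) (j k : ι) : ℂ := g (x j - x k)

/-- A solution on the time set `S` of the first-order system of poles at `x τ j`, moving with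
velocities `v τ j` and carrying the spins `u τ j` and charges `r j`, coupled to the background
field `Y`. -/
structure IsSpinPoleFlow (Λ : Set ℂ) (ζ P F : ℂ → ℂ) (S : Set ℝ) (r : ι → ℂ)
    (u : ℝ → ι → Fin 3 → ℂ) (x v : ℝ → ι → ℂ) (Y : ℝ → Fin 3 → ℂ) : Prop where
  separated : ∀ τ ∈ S, ∀ j k, j ≠ k → x τ j - x τ k ∉ Λ
  position : ∀ τ ∈ S, ∀ j, HasDerivWithinAt (x · j) (v τ j) S τ
  spin : ∀ τ ∈ S, ∀ j,
    HasDerivWithinAt (u · j) (spinVelocity r (interaction P (x τ)) (u τ) j) S τ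
  pole : ∀ τ ∈ S, ∀ j,
    v τ j • u τ j = -r j • (u τ j ⨯₃ localField (Y τ) (interaction ζ (x τ)) (u τ) j)
  background : ∀ τ ∈ S,
    HasDerivWithinAt Y (backgroundVelocity r (interaction F (x τ)) (u τ)) S τ

namespace IsSpinPoleFlow

variable {Λ : Set ℂ} {ζ P F : ℂ → ℂ} {S : Set ℝ} {r : ι → ℂ} {u : ℝ → ι → Fin 3 → ℂ}
  {x v : ℝ → ι → ℂ} {Y : ℝ → Fin 3 → ℂ}

lemma sum_spin_const (flow : IsSpinPoleFlow Λ ζ P F S r u x v Y) (even : ∀ z, P (-z) = P z)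
    (hS : Convex ℝ S) {τ₁ τ₂ : ℝ} (h₁ : τ₁ ∈ S) (h₂ : τ₂ ∈ S) :
    ∑ j, u τ₁ j = ∑ j, u τ₂ j := by
  refine eq_of_hasDerivWithinAt_zero (f := fun τ ↦ ∑ j, u τ j) hS (fun τ hτ ↦ ?_) h₁ h₂
  refine (HasDerivWithinAt.fun_sum fun j _ ↦ flow.spin τ hτ j).congr_deriv (sum_spinVelocity ?_)
  exact fun j k ↦ by rw [interaction, interaction, ← even, neg_sub]

lemma hasDerivWithinAt_interaction (flow : IsSpinPoleFlow Λ ζ P F S r u x v Y)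
    (hasDerivAt : ∀ z ∉ Λ, HasDerivAt ζ (-P z) z) {τ : ℝ} (hτ : τ ∈ S) (j k : ι) :
    HasDerivWithinAt (fun τ ↦ interaction ζ (x τ) j k)
      (-(interaction P (x τ) j k * (v τ j - v τ k))) S τ := by
  rcases eq_or_ne j k with rfl | hjk
  · simpa only [interaction, sub_self, mul_zero, neg_zero] using hasDerivWithinAt_const τ S (ζ 0)
  · exact ((hasDerivAt _ (flow.separated τ hτ j k hjk)).comp_hasDerivWithinAt τ
      ((flow.position τ hτ j).sub (flow.position τ hτ k))).congr_deriv (neg_mul _ _)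

lemma hasDerivWithinAt_localField (flow : IsSpinPoleFlow Λ ζ P F S r u x v Y)
    (hasDerivAt : ∀ z ∉ Λ, HasDerivAt ζ (-P z) z) {τ : ℝ} (hτ : τ ∈ S) (j : ι) :
    HasDerivWithinAt (fun τ ↦ localField (Y τ) (interaction ζ (x τ)) (u τ) j)
      (backgroundVelocity r (interaction F (x τ)) (u τ) -
        ∑ k, (interaction ζ (x τ) j k • spinVelocity r (interaction P (x τ)) (u τ) k +
          (-(interaction P (x τ) j k * (v τ j - v τ k))) • u τ k)) S τ :=
  (flow.background τ hτ).sub (HasDerivWithinAt.fun_sum fun k _ ↦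
    (flow.hasDerivWithinAt_interaction hasDerivAt hτ j k).smul (flow.spin τ hτ k))

theorem charge_const (flow : IsSpinPoleFlow Λ ζ P F S r u x v Y)
    (kernel : IsSpinPoleKernel Λ ζ P F) (hS : Convex ℝ S) {τ₀ : ℝ} (h₀ : τ₀ ∈ S)
    (sum_zero : ∑ j, u τ₀ j = 0) (j : ι) {τ₁ τ₂ : ℝ} (h₁ : τ₁ ∈ S) (h₂ : τ₂ ∈ S) :
    u τ₁ j ⬝ᵥ localField (Y τ₁) (interaction ζ (x τ₁)) (u τ₁) j =
      u τ₂ j ⬝ᵥ localField (Y τ₂) (interaction ζ (x τ₂)) (u τ₂) j := by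
  refine eq_of_hasDerivWithinAt_zero
    (f := fun τ ↦ u τ j ⬝ᵥ localField (Y τ) (interaction ζ (x τ)) (u τ) j) hS
    (fun τ hτ ↦ ?_) h₁ h₂
  have rate := hasDerivWithinAt_dotProduct (flow.spin τ hτ j)
    (flow.hasDerivWithinAt_localField kernel.hasDerivAt hτ j)
  refine rate.congr_deriv (charge_rate_eq_zero ?symmetric ?functional_equation ?_
    (flow.pole τ hτ) j)
  case symmetric => exact fun j k ↦ by rw [interaction, interaction, ← kernel.even, neg_sub]
  case functional_equation =>
    intro j k l hjk hkl hjl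
    have sum_eq := sub_add_sub_cancel (x τ j) (x τ k) (x τ l)
    have separated := flow.separated τ hτ
    simpa only [interaction, sum_eq] using kernel.functional_equation _ _ (separated j k hjk)
      (separated k l hkl) (sum_eq ▸ separated j l hjl)
  · rw [← sum_zero, flow.sum_spin_const kernel.even hS hτ h₀]

end IsSpinPoleFlow

end SpinPoleDynamics

section TwoSpecies

lemma cross3_eq (w x : Fin 3 → ℂ) : cross3 w x = w ⨯₃ x := (cross_apply w x).symm

lemma dot3_eq (w x : Fin 3 → ℂ) : dot3 w x = w ⬝ᵥ x := (Matrix.vec3_dotProduct w x).symm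

variable {α β : Type*}

/-- The charges of two species of poles: `1` on `α` and `-1` on `β`. -/
def mergedCharge : α ⊕ β → ℂ := Sum.elim 1 (-1)

/-- The spins of two species with opposite charges, as those of a single system; the spins of the
second species enter with the opposite sign. -/
def mergedSpin (s : α → Fin 3 → ℂ) (t : β → Fin 3 → ℂ) : α ⊕ β → Fin 3 → ℂ := Sum.elim s (-t)

/-- The positions of two species, as those of a single system; those of the second species are
translated by `-w`. -/
def mergedPosition (w : ℂ) (a : α → ℂ) (b : β → ℂ) : α ⊕ β → ℂ := Sum.elim a fun k ↦ b k - w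

variable {ζ P f : ℂ → ℂ} {w : ℂ} {a : α → ℂ} {b : β → ℂ} {s : α → Fin 3 → ℂ}
  {t : β → Fin 3 → ℂ}

lemma mergedPosition_separated {Λ : Set ℂ} (hΛ : ∀ z ∈ Λ, -z ∈ Λ)
    (ha : ∀ j k, j ≠ k → a j - a k ∉ Λ) (hb : ∀ j k, j ≠ k → b j - b k ∉ Λ)
    (hab : ∀ j k, a j - b k + w ∉ Λ) (j k : α ⊕ β) (hjk : j ≠ k) :
    mergedPosition w a b j - mergedPosition w a b k ∉ Λ := by
  rcases j with j | j <;> rcases k with k | k <;>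
    simp only [mergedPosition, Sum.elim_inl, Sum.elim_inr, sub_sub_sub_cancel_right]
  · exact ha j k (ne_of_apply_ne _ hjk)
  · simpa only [sub_sub_eq_add_sub, add_sub_right_comm] using hab j k
  · intro mem
    refine hab k j ?_
    convert hΛ _ mem using 1
    ring
  · exact hb j k (ne_of_apply_ne _ hjk)

variable [Fintype α] [Fintype β]

lemma sum_erase_smul_cross [DecidableEq α] (c : α → ℂ) (j : α) :
    ∑ k ∈ Finset.univ.erase j, c k • cross3 (s j) (s k) = ∑ k, c k • (s j ⨯₃ s k) := by
  simp only [cross3_eq]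
  exact Finset.sum_erase _ (by rw [cross_self, smul_zero])

lemma spinVelocity_merged_inl [DecidableEq α] (j : α) :
    spinVelocity mergedCharge (interaction P (mergedPosition w a b)) (mergedSpin s t) (.inl j) =
      (-2 : ℂ) • ∑ k ∈ Finset.univ.erase j, P (a j - a k) • cross3 (s j) (s k) := by
  rw [sum_erase_smul_cross]
  simp only [spinVelocity, Fintype.sum_sum_type, interaction, mergedPosition, mergedCharge,
    mergedSpin, Sum.elim_inl, Sum.elim_inr, Pi.one_apply, Pi.neg_apply, one_add_one_eq_two,
    add_neg_cancel, zero_smul, Finset.sum_const_zero, add_zero, mul_smul,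
    ← Finset.smul_sum, neg_smul]

lemma spinVelocity_merged_inr [DecidableEq β] (j : β) :
    spinVelocity mergedCharge (interaction P (mergedPosition w a b)) (mergedSpin s t) (.inr j) =
      -((-2 : ℂ) • ∑ k ∈ Finset.univ.erase j, P (b j - b k) • cross3 (t j) (t k)) := by
  rw [sum_erase_smul_cross]
  simp only [spinVelocity, Fintype.sum_sum_type, interaction, mergedPosition, mergedCharge,
    mergedSpin, Sum.elim_inl, Sum.elim_inr, Pi.one_apply, Pi.neg_apply, neg_add_cancel,
    zero_smul, Finset.sum_const_zero, zero_add, sub_sub_sub_cancel_right, mul_smul,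
    ← Finset.smul_sum, map_neg, LinearMap.neg_apply, neg_neg]
  module

lemma localField_merged_inl [DecidableEq α] (hζ : ∀ z, ζ (-z) = -ζ z) (Y : Fin 3 → ℂ) (j : α) :
    localField Y (interaction ζ (mergedPosition w a b)) (mergedSpin s t) (.inl j) =
      Y - ∑ k ∈ Finset.univ.erase j, ζ (a j - a k) • s k + ∑ k, ζ (a j - b k + w) • t k := by
  have zeta_zero : ζ 0 = 0 := CharZero.eq_neg_self_iff.mp (by simpa using hζ 0)
  rw [Finset.sum_erase _ (by rw [sub_self, zeta_zero, zero_smul])]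
  simp only [localField, Fintype.sum_sum_type, interaction, mergedPosition, mergedSpin,
    Sum.elim_inl, Sum.elim_inr, Pi.neg_apply, smul_neg, Finset.sum_neg_distrib, ← sub_eq_add_neg,
    sub_sub_eq_add_sub, add_sub_right_comm]

lemma localField_merged_inr [DecidableEq β] {Λ : Set ℂ} (hΛ : ∀ z ∈ Λ, -z ∈ Λ)
    (hζ : ∀ z, ζ (-z) = -ζ z) (periodic : ∀ z, z - w ∉ Λ → ζ (z + w) = ζ (z - w))
    (Y : Fin 3 → ℂ) (j : β) (hab : ∀ k, a k - b j + w ∉ Λ) :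
    localField Y (interaction ζ (mergedPosition w a b)) (mergedSpin s t) (.inr j) =
      Y + ∑ k ∈ Finset.univ.erase j, ζ (b j - b k) • t k - ∑ k, ζ (b j - a k + w) • s k := by
  have zeta_zero : ζ 0 = 0 := CharZero.eq_neg_self_iff.mp (by simpa using hζ 0)
  have zeta_shift (k : α) : ζ (b j - a k + w) = ζ (b j - w - a k) := by
    have avoid : b j - a k - w ∉ Λ := fun mem ↦ hab k (by convert hΛ _ mem using 1; ring)
    rw [periodic _ avoid, sub_right_comm]
  rw [Finset.sum_erase _ (by rw [sub_self, zeta_zero, zero_smul])]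
  simp only [localField, Fintype.sum_sum_type, interaction, mergedPosition, mergedSpin, zeta_shift,
    Sum.elim_inl, Sum.elim_inr, Pi.neg_apply, smul_neg, Finset.sum_neg_distrib,
    sub_sub_sub_cancel_right]
  abel

lemma backgroundVelocity_merged [DecidableEq α] [DecidableEq β] (hf : ∀ z, f (-z) = -f z) :
    backgroundVelocity mergedCharge (interaction (fun z ↦ f z / 2) (mergedPosition w a b))
        (mergedSpin s t) =
      I • ((I / 2) • ∑ j, ∑ k ∈ Finset.univ.erase j, f (a j - a k) • cross3 (s j) (s k) -
        (I / 2) • ∑ j, ∑ k ∈ Finset.univ.erase j, f (b j - b k) • cross3 (t j) (t k)) := by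
  have mixed : ∑ k, ∑ j, f (b k - w - a j) • (t k ⨯₃ s j) =
      ∑ j, ∑ k, f (a j - (b k - w)) • (s j ⨯₃ t k) := by
    rw [Finset.sum_comm]
    refine Fintype.sum_congr _ _ fun j ↦ Fintype.sum_congr _ _ fun k ↦ ?_
    rw [← neg_sub (a j), hf, ← cross_anticomm, neg_smul_neg]
  simp only [backgroundVelocity, sum_erase_smul_cross, Fintype.sum_sum_type, interaction,
    mergedPosition, mergedCharge, mergedSpin, Sum.elim_inl, Sum.elim_inr, Pi.one_apply,
    Pi.neg_apply, sub_sub_sub_cancel_right, map_neg, LinearMap.neg_apply, smul_neg, neg_smul,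
    neg_neg, Finset.sum_add_distrib, Finset.sum_neg_distrib, div_eq_inv_mul, mul_smul,
    ← Finset.smul_sum, mixed]
  have I_mul_I_half : I * (2⁻¹ * I) = -2⁻¹ := by rw [mul_left_comm, I_mul_I, mul_neg_one]
  simp only [smul_sub, smul_smul, I_mul_I_half]
  module

lemma sum_mergedSpin : ∑ j, mergedSpin s t j = ∑ j, s j - ∑ j, t j := by
  simp only [Fintype.sum_sum_type, mergedSpin, Sum.elim_inl, Sum.elim_inr, Pi.neg_apply,
    Finset.sum_neg_distrib, sub_eq_add_neg]

theorem isSpinPoleFlow_merged [DecidableEq α] [DecidableEq β] {Λ : Set ℂ} {S : Set ℝ}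
    {a adot : α → ℝ → ℂ} {b bdot : β → ℝ → ℂ} {s : α → ℝ → Fin 3 → ℂ} {t : β → ℝ → Fin 3 → ℂ}
    {φ : ℝ → Fin 3 → ℂ} (hΛ : ∀ z ∈ Λ, -z ∈ Λ) (hζ : ∀ z, ζ (-z) = -ζ z)
    (hf : ∀ z, f (-z) = -f z) (periodic : ∀ z, z - w ∉ Λ → ζ (z + w) = ζ (z - w))
    (ha : ∀ j, ∀ τ ∈ S, HasDerivWithinAt (a j) (adot j τ) S τ)
    (hb : ∀ j, ∀ τ ∈ S, HasDerivWithinAt (b j) (bdot j τ) S τ)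
    (haa : ∀ τ ∈ S, ∀ j k, j ≠ k → a j τ - a k τ ∉ Λ)
    (hbb : ∀ τ ∈ S, ∀ j k, j ≠ k → b j τ - b k τ ∉ Λ)
    (hab : ∀ τ ∈ S, ∀ j k, a j τ - b k τ + w ∉ Λ)
    (hsdot : ∀ j, ∀ τ ∈ S, HasDerivWithinAt (s j) ((-2 : ℂ) •
      ∑ k ∈ Finset.univ.erase j, P (a j τ - a k τ) • cross3 (s j τ) (s k τ)) S τ)
    (htdot : ∀ j, ∀ τ ∈ S, HasDerivWithinAt (t j) ((-2 : ℂ) •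
      ∑ k ∈ Finset.univ.erase j, P (b j τ - b k τ) • cross3 (t j τ) (t k τ)) S τ)
    (hadot : ∀ j, ∀ τ ∈ S, adot j τ • s j τ = -cross3 (s j τ) (I • φ τ -
      ∑ k ∈ Finset.univ.erase j, ζ (a j τ - a k τ) • s k τ + ∑ k, ζ (a j τ - b k τ + w) • t k τ))
    (hbdot : ∀ j, ∀ τ ∈ S, bdot j τ • t j τ = cross3 (t j τ) (I • φ τ +
      ∑ k ∈ Finset.univ.erase j, ζ (b j τ - b k τ) • t k τ - ∑ k, ζ (b j τ - a k τ + w) • s k τ))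
    (hφdot : ∀ τ ∈ S, HasDerivWithinAt φ
      ((I / 2) • ∑ j, ∑ k ∈ Finset.univ.erase j, f (a j τ - a k τ) • cross3 (s j τ) (s k τ) -
        (I / 2) • ∑ j, ∑ k ∈ Finset.univ.erase j, f (b j τ - b k τ) • cross3 (t j τ) (t k τ))
      S τ) :
    IsSpinPoleFlow Λ ζ P (fun z ↦ f z / 2) S mergedCharge (fun τ ↦ mergedSpin (s · τ) (t · τ))
      (fun τ ↦ mergedPosition w (a · τ) (b · τ)) (fun τ ↦ Sum.elim (adot · τ) (bdot · τ))
      (fun τ ↦ I • φ τ) where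
  separated τ hτ := mergedPosition_separated hΛ (haa τ hτ) (hbb τ hτ) (hab τ hτ)
  position τ hτ
    | .inl j => ha j τ hτ
    | .inr j => (hb j τ hτ).sub_const w
  spin τ hτ
    | .inl j => by
      rw [spinVelocity_merged_inl]
      exact hsdot j τ hτ
    | .inr j => by
      rw [spinVelocity_merged_inr]
      exact (htdot j τ hτ).neg
  pole τ hτ
    | .inl j => by
      rw [localField_merged_inl hζ]
      simpa only [mergedCharge, mergedSpin, Sum.elim_inl, Pi.one_apply, neg_smul, one_smul,
        cross3_eq] using hadot j τ hτ
    | .inr j => by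
      rw [localField_merged_inr (a := (a · τ)) (b := (b · τ)) hΛ hζ periodic _ j (hab τ hτ · j)]
      simpa only [mergedCharge, mergedSpin, Sum.elim_inr, Pi.neg_apply, Pi.one_apply, neg_neg,
        one_smul, smul_neg, map_neg, LinearMap.neg_apply, neg_inj, cross3_eq] using
        congrArg Neg.neg (hbdot j τ hτ)
  background τ hτ := by
    rw [backgroundVelocity_merged hf]
    exact (hφdot τ hτ).const_smul I

end TwoSpecies

/-- Conservation of the quantities `Q_j` under the first-order system. -/
theorem Q_conserved
    (ℓ δ : ℝ) (hℓ : 0 < ℓ) (hδ : 0 < δ)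
    (N M : ℕ) (hN : 1 ≤ N) (hM : 1 ≤ M)
    (T : ℝ) (hT : 0 < T)
    (φ : ℝ → Fin 3 → ℂ)
    (a : Fin N → ℝ → ℂ) (s : Fin N → ℝ → Fin 3 → ℂ)
    (b : Fin M → ℝ → ℂ) (t : Fin M → ℝ → Fin 3 → ℂ)
    (adot : Fin N → ℝ → ℂ) (bdot : Fin M → ℝ → ℂ)
    -- differentiability of the positions, with derivatives `adot`, `bdot`
    (ha : ∀ j, ∀ τ ∈ Set.Ico (0:ℝ) T, HasDerivWithinAt (a j) (adot j τ) (Set.Ico (0:ℝ) T) τ)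
    (hb : ∀ j, ∀ τ ∈ Set.Ico (0:ℝ) T, HasDerivWithinAt (b j) (bdot j τ) (Set.Ico (0:ℝ) T) τ)
    -- nondegeneracy: differences of poles avoid the lattice
    (haa : ∀ τ ∈ Set.Ico (0:ℝ) T, ∀ j k : Fin N, j ≠ k → a j τ - a k τ ∉ Lambda ℓ δ)
    (hbb : ∀ τ ∈ Set.Ico (0:ℝ) T, ∀ j k : Fin M, j ≠ k → b j τ - b k τ ∉ Lambda ℓ δ)
    (hab : ∀ τ ∈ Set.Ico (0:ℝ) T, ∀ (j : Fin N) (k : Fin M),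
      a j τ - b k τ + (δ : ℂ) * Complex.I ∉ Lambda ℓ δ)
    -- the first-order system: spin equations
    (hsdot : ∀ j, ∀ τ ∈ Set.Ico (0:ℝ) T, HasDerivWithinAt (s j)
      ((-2 : ℂ) • ∑ k ∈ Finset.univ.erase j, wp2 ℓ δ (a j τ - a k τ) • cross3 (s j τ) (s k τ))
      (Set.Ico (0:ℝ) T) τ)
    (htdot : ∀ j, ∀ τ ∈ Set.Ico (0:ℝ) T, HasDerivWithinAt (t j)
      ((-2 : ℂ) • ∑ k ∈ Finset.univ.erase j, wp2 ℓ δ (b j τ - b k τ) • cross3 (t j τ) (t k τ))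
      (Set.Ico (0:ℝ) T) τ)
    -- the first-order system: pole equations
    (hadot : ∀ j, ∀ τ ∈ Set.Ico (0:ℝ) T,
      adot j τ • s j τ = -cross3 (s j τ)
        (Complex.I • φ τ - ∑ k ∈ Finset.univ.erase j, zeta2 ℓ δ (a j τ - a k τ) • s k τ
          + ∑ k : Fin M, zeta2 ℓ δ (a j τ - b k τ + (δ : ℂ) * Complex.I) • t k τ))
    (hbdot : ∀ j, ∀ τ ∈ Set.Ico (0:ℝ) T,
      bdot j τ • t j τ = cross3 (t j τ)
        (Complex.I • φ τ + ∑ k ∈ Finset.univ.erase j, zeta2 ℓ δ (b j τ - b k τ) • t k τ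
          - ∑ k : Fin N, zeta2 ℓ δ (b j τ - a k τ + (δ : ℂ) * Complex.I) • s k τ))
    -- the first-order system: background equation
    (hφdot : ∀ τ ∈ Set.Ico (0:ℝ) T, HasDerivWithinAt φ
      ((Complex.I / 2) • ∑ j : Fin N, ∑ k ∈ Finset.univ.erase j,
          deriv (f2 ℓ δ) (a j τ - a k τ) • cross3 (s j τ) (s k τ)
        - (Complex.I / 2) • ∑ j : Fin M, ∑ k ∈ Finset.univ.erase j,
          deriv (f2 ℓ δ) (b j τ - b k τ) • cross3 (t j τ) (t k τ))
      (Set.Ico (0:ℝ) T) τ)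
    (hC3 : (∑ j : Fin N, s j 0) - ∑ j : Fin M, t j 0 = 0) :
    (∀ j : Fin N, ∀ τ₁ ∈ Set.Ico (0:ℝ) T, ∀ τ₂ ∈ Set.Ico (0:ℝ) T,
      dot3 (s j τ₁)
        (Complex.I • φ τ₁ - ∑ k ∈ Finset.univ.erase j, zeta2 ℓ δ (a j τ₁ - a k τ₁) • s k τ₁
          + ∑ k : Fin M, zeta2 ℓ δ (a j τ₁ - b k τ₁ + (δ : ℂ) * Complex.I) • t k τ₁)
      = dot3 (s j τ₂)
        (Complex.I • φ τ₂ - ∑ k ∈ Finset.univ.erase j, zeta2 ℓ δ (a j τ₂ - a k τ₂) • s k τ₂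
          + ∑ k : Fin M, zeta2 ℓ δ (a j τ₂ - b k τ₂ + (δ : ℂ) * Complex.I) • t k τ₂)) ∧
    (∀ j : Fin M, ∀ τ₁ ∈ Set.Ico (0:ℝ) T, ∀ τ₂ ∈ Set.Ico (0:ℝ) T,
      dot3 (t j τ₁)
        (Complex.I • φ τ₁ + ∑ k ∈ Finset.univ.erase j, zeta2 ℓ δ (b j τ₁ - b k τ₁) • t k τ₁
          - ∑ k : Fin N, zeta2 ℓ δ (b j τ₁ - a k τ₁ + (δ : ℂ) * Complex.I) • s k τ₁)
      = dot3 (t j τ₂)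
        (Complex.I • φ τ₂ + ∑ k ∈ Finset.univ.erase j, zeta2 ℓ δ (b j τ₂ - b k τ₂) • t k τ₂
          - ∑ k : Fin N, zeta2 ℓ δ (b j τ₂ - a k τ₂ + (δ : ℂ) * Complex.I) • s k τ₂)) := by
  have neg_mem : ∀ z ∈ Lambda ℓ δ, -z ∈ Lambda ℓ δ := fun _ ↦ neg_mem_Lambda
  have periodic (z : ℂ) := zeta2_add_half_period hℓ hδ (z := z)
  have field_inl (τ : ℝ) := localField_merged_inl (w := δ * I) (a := (a · τ)) (b := (b · τ))
    (s := (s · τ)) (t := (t · τ)) (zeta2_neg hℓ hδ) (I • φ τ)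
  have field_inr (j : Fin M) (τ : ℝ) (hτ : τ ∈ Set.Ico 0 T) :=
    localField_merged_inr (a := (a · τ)) (b := (b · τ)) (s := (s · τ)) (t := (t · τ)) neg_mem
      (zeta2_neg hℓ hδ) periodic (I • φ τ) j (hab τ hτ · j)
  have flow := isSpinPoleFlow_merged neg_mem (zeta2_neg hℓ hδ) (deriv_f2_neg hℓ hδ) periodic
    ha hb haa hbb hab hsdot htdot hadot hbdot hφdot
  have charge_const := flow.charge_const (isSpinPoleKernel_zeta2 hℓ hδ) (convex_Ico 0 T)
    ⟨le_rfl, hT⟩ (sum_mergedSpin.trans hC3)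
  refine ⟨fun j τ₁ h₁ τ₂ h₂ ↦ ?_, fun j τ₁ h₁ τ₂ h₂ ↦ ?_⟩
  · rw [dot3_eq, dot3_eq, ← field_inl, ← field_inl]
    exact charge_const (.inl j) h₁ h₂
  · rw [dot3_eq, dot3_eq, ← field_inr j τ₁ h₁, ← field_inr j τ₂ h₂, ← neg_inj, ← neg_dotProduct,
      ← neg_dotProduct]
    exact charge_const (.inr j) h₁ h₂

end
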